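/- Let R be a local Gorenstein ring of Krull dimension d < ∞, and let C be a finitely generated R-module that is d-semidualizing, i.e., Hom_R(C,C) ≅ R and Ext^i_R(C,C) = 0 for all 0 < i ≤ d. Then C ≅ R. -/

import Mathlib

open CategoryTheory

/-- A commutative noetherian ring is Gorenstein (of finite Krull dimension) if it has finite
injective dimension as a module over itself, characterized by the eventual vanishing of
`Ext^i_R(M, R)` for all modules `M` and all sufficiently large `i`. -/
def IsGorensteinRing (R : Type) [CommRing R] : Prop :=
  IsNoetherianRing R ∧ ∃ d : ℕ, ∀ (M : ModuleCat R) (i : ℕ), d < i →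
    Subsingleton (((Ext R (ModuleCat R) i).obj (Opposite.op M)).obj (ModuleCat.of R R))

/-- A finitely generated module `C` over a commutative ring `R` is `m`-semidualizing if the
natural homothety map `R → Hom_R(C,C)` is an isomorphism and `Ext^i_R(C,C) = 0` for
all `0 < i ≤ m`. -/
def IsSemidualizing (R : Type) [CommRing R] (C : Type) [AddCommGroup C] [Module R C]
    (m : ℕ) : Prop :=
  Module.Finite R C ∧ Function.Bijective (LinearMap.lsmul R C) ∧
    ∀ i : ℕ, 0 < i → i ≤ m →
      Subsingleton (((Ext R (ModuleCat R) i).obj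
        (Opposite.op (ModuleCat.of R C))).obj (ModuleCat.of R C))

/-!
Write `k` for the residue field, choose a maximal `R`-regular sequence `rs` and put `S = R / (rs)`,
so that `k` embeds in `S` and `S` has projective dimension `rs.length ≤ d`. Descending from the
injective dimension of `R`, Bass' argument kills `Ext^j(M, R)` for finite `M` and `j > rs.length`.
On modules killed by `rs`, the functor `Hom(-, S) ≅ Ext^{rs.length}(-, R)` (Rees) is then exact, so
every map `k → S` extends along the embedding of `k` to an endomorphism of `S`, that is, to a
multiplication: `Hom(k, S)` is principal.

The vanishing of `Ext^i(C, C)` for `0 < i ≤ d` lets `R ≅ Hom(C, C)` descend to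
`S ≅ Hom(C, C / (rs) C)`. A nonzero map `k → S` produces an embedding of `k` in `C / (rs) C`, hence
one of `Hom(C, k)` in `Hom(k, Hom(C, C / (rs) C)) ≅ Hom(k, S)`. So `Hom(C, k)` is principal, `C` is
cyclic by Nakayama's lemma, and a cyclic faithful module is free of rank one.
-/

open IsLocalRing RingTheory.Sequence
open Abelian.Ext (mk₀)
open scoped Pointwise TensorProduct

universe w v u

section ShortExact

variable {𝒞 : Type u} [Category.{v} 𝒞] [Abelian 𝒞] [HasExt.{w} 𝒞] {S : ShortComplex 𝒞}

theorem subsingleton_ext_X₁_of_shortExact (hS : S.ShortExact) (Y : 𝒞) (n : ℕ)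
    (h₂ : Subsingleton (Abelian.Ext S.X₂ Y n)) (h₃ : Subsingleton (Abelian.Ext S.X₃ Y (n + 1))) :
    Subsingleton (Abelian.Ext S.X₁ Y n) := by
  refine subsingleton_of_forall_eq 0 fun α ↦ ?_
  obtain ⟨β, rfl⟩ := Abelian.Ext.contravariant_sequence_exact₁ hS Y α (add_comm 1 n)
    (h₃.elim _ _)
  rw [h₂.elim β 0, Abelian.Ext.comp_zero]

theorem subsingleton_ext_X₂_of_shortExact (hS : S.ShortExact) (Y : 𝒞) (n : ℕ)
    (h₁ : Subsingleton (Abelian.Ext S.X₁ Y n)) (h₃ : Subsingleton (Abelian.Ext S.X₃ Y n)) :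
    Subsingleton (Abelian.Ext S.X₂ Y n) := by
  refine subsingleton_of_forall_eq 0 fun α ↦ ?_
  obtain ⟨β, rfl⟩ := Abelian.Ext.contravariant_sequence_exact₂ hS Y α (h₁.elim _ _)
  rw [h₃.elim β 0, Abelian.Ext.comp_zero]

theorem postcomp_extClass_injective (hS : S.ShortExact) (X : 𝒞) (n : ℕ)
    (h₂ : Subsingleton (Abelian.Ext X S.X₂ n)) :
    Function.Injective fun η : Abelian.Ext X S.X₃ n ↦ η.comp hS.extClass rfl := by
  refine (injective_iff_map_eq_zero (hS.extClass.postcomp X rfl)).mpr fun η hη ↦ ?_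
  obtain ⟨β, rfl⟩ := Abelian.Ext.covariant_sequence_exact₃ X hS η rfl hη
  rw [h₂.elim β 0, Abelian.Ext.zero_comp]

theorem subsingleton_ext_to_X₃_of_shortExact (hS : S.ShortExact) (X : 𝒞) (n : ℕ)
    (h₁ : Subsingleton (Abelian.Ext X S.X₁ (n + 1))) (h₂ : Subsingleton (Abelian.Ext X S.X₂ n)) :
    Subsingleton (Abelian.Ext X S.X₃ n) :=
  ⟨fun _ _ ↦ postcomp_extClass_injective hS X n h₂ (h₁.elim _ _)⟩

theorem exists_comp_g_eq_of_subsingleton_ext (hS : S.ShortExact) {X : 𝒞}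
    (h : Subsingleton (Abelian.Ext X S.X₁ 1)) (φ : X ⟶ S.X₃) : ∃ ψ : X ⟶ S.X₂, ψ ≫ S.g = φ := by
  obtain ⟨β, hβ⟩ := Abelian.Ext.covariant_sequence_exact₃ X hS (mk₀ φ) rfl (h.elim _ _)
  obtain ⟨ψ, rfl⟩ := Abelian.Ext.addEquiv₀.symm.surjective β
  exact ⟨ψ, Abelian.Ext.addEquiv₀.symm.injective (by simpa using hβ)⟩

end ShortExact

variable {R : Type u} [CommRing R]

theorem subsingleton_abelianExt_of_subsingleton_ext (M Y : ModuleCat.{u} R) {i : ℕ} (hi : 0 < i)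
    (h : Subsingleton (((Ext R (ModuleCat.{u} R) i).obj (Opposite.op M)).obj Y)) :
    Subsingleton (Abelian.Ext M Y i) := by
  obtain ⟨p, rfl⟩ := Nat.exists_eq_add_one.mpr hi
  let P := projectiveResolution M
  have hP : Limits.IsZero ((P.complex.linearYonedaObj R Y).homology (p + 1)) :=
    .of_iso (ModuleCat.isZero_of_subsingleton _) (P.isoExt (p + 1) Y).symm
  rw [← HomologicalComplex.exactAt_iff_isZero_homology,
    HomologicalComplex.exactAt_iff' _ p (p + 1) (p + 2) (by simp) (by simp),
    ShortComplex.moduleCat_exact_iff] at hP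
  refine subsingleton_of_forall_eq 0 fun α ↦ ?_
  obtain ⟨f, hf, rfl⟩ := P.extMk_surjective α (p + 2) rfl
  rw [P.extMk_eq_zero_iff f (p + 2) rfl hf p rfl]
  exact hP f hf

section Rees

variable {M N : ModuleCat.{v} R} {x : R} [Small.{v} R]

theorem postcomp_extClass_smulShortComplex_surjective (hx : IsSMulRegular N x)
    (hM : x ∈ Module.annihilator R M) (n : ℕ) :
    Function.Surjective fun η : Abelian.Ext M (ModuleCat.of R (QuotSMulTop x N)) n ↦
      η.comp hx.smulShortComplex_shortExact.extClass rfl := by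
  refine fun η ↦ Abelian.Ext.covariant_sequence_exact₁ M hx.smulShortComplex_shortExact η ?_ rfl
  exact congr($(Abelian.Ext.postcomp_smul_id_eq_zero_of_mem_annihilator hM (n + 1)) η)

theorem subsingleton_ext_of_isWeaklyRegular {rs : List R} (hN : IsWeaklyRegular N rs)
    (hM : Ideal.ofList rs ≤ Module.annihilator R M) {i : ℕ} (hi : i < rs.length) :
    Subsingleton (Abelian.Ext M N i) := by
  induction rs generalizing N i with
  | nil => simp at hi
  | cons r rs ih =>
    rw [isWeaklyRegular_cons_iff] at hN
    rw [Ideal.ofList_cons, sup_le_iff, Ideal.span_singleton_le_iff_mem] at hM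
    cases i with
    | zero =>
      have := hN.1.linearMap_subsingleton_of_mem_annihilator hM.1
      exact (Abelian.Ext.addEquiv₀.trans ModuleCat.homAddEquiv).subsingleton
    | succ i =>
      have := ih (N := ModuleCat.of R (QuotSMulTop r N)) hN.2 hM.2 (by simpa using hi)
      exact (postcomp_extClass_smulShortComplex_surjective hN.1 hM.1 i).subsingleton

theorem exists_bijective_mk₀_comp_of_isWeaklyRegular {rs : List R} (hN : IsWeaklyRegular N rs) :
    ∃ ε : Abelian.Ext (ModuleCat.of R (N ⧸ (Ideal.ofList rs • ⊤ : Submodule R N))) N rs.length,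
      ∀ M : ModuleCat.{v} R, Ideal.ofList rs ≤ Module.annihilator R M →
        Function.Bijective fun f : M ⟶ ModuleCat.of R (N ⧸ (Ideal.ofList rs • ⊤ : Submodule R N)) ↦
          (mk₀ f).comp ε (zero_add _) := by
  induction rs generalizing N with
  | nil =>
    let e : ModuleCat.of R (N ⧸ (Ideal.ofList ([] : List R) • ⊤ : Submodule R N)) ≅ N :=
      (Submodule.quotEquivOfEqBot _ (by simp)).toModuleIso
    refine ⟨mk₀ e.hom, fun M _ ↦ ?_⟩
    simpa [Function.comp_def] using
      Abelian.Ext.addEquiv₀.symm.bijective.comp (e.homToEquiv (Z := M)).bijective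
  | cons r rs ih =>
    rw [isWeaklyRegular_cons_iff] at hN
    obtain ⟨ε, hε⟩ := ih (N := ModuleCat.of R (QuotSMulTop r N)) hN.2
    let e := (Submodule.quotOfListConsSMulTopEquivQuotSMulTopInner N r rs).toModuleIso
    let δ : Abelian.Ext (ModuleCat.of R (QuotSMulTop r N)) N 1 :=
      hN.1.smulShortComplex_shortExact.extClass
    refine ⟨(mk₀ e.hom).comp (ε.comp δ rfl) (zero_add _), fun M hM ↦ ?_⟩
    have hM₀ : Subsingleton (Abelian.Ext M N rs.length) :=
      subsingleton_ext_of_isWeaklyRegular (.cons hN.1 hN.2) hM (by simp)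
    rw [Ideal.ofList_cons, sup_le_iff, Ideal.span_singleton_le_iff_mem] at hM
    have hδ : Function.Bijective fun η : Abelian.Ext M _ rs.length ↦ η.comp δ rfl :=
      ⟨postcomp_extClass_injective hN.1.smulShortComplex_shortExact M _ hM₀,
        postcomp_extClass_smulShortComplex_surjective hN.1 hM.1 _⟩
    convert! hδ.comp ((hε M hM.2).comp (e.homToEquiv (Z := M)).bijective) using 2
    simp [← Abelian.Ext.mk₀_comp_mk₀_assoc, Abelian.Ext.comp_assoc]

theorem exists_comp_eq_of_isWeaklyRegular {rs : List R} (hN : IsWeaklyRegular N rs)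
    {S : ShortComplex (ModuleCat.{v} R)} (hS : S.ShortExact)
    (hS₂ : Ideal.ofList rs ≤ Module.annihilator R S.X₂)
    (hS₃ : Subsingleton (Abelian.Ext S.X₃ N (rs.length + 1)))
    (f : S.X₁ ⟶ ModuleCat.of R (N ⧸ (Ideal.ofList rs • ⊤ : Submodule R N))) :
    ∃ g : S.X₂ ⟶ ModuleCat.of R (N ⧸ (Ideal.ofList rs • ⊤ : Submodule R N)), S.f ≫ g = f := by
  obtain ⟨ε, hε⟩ := exists_bijective_mk₀_comp_of_isWeaklyRegular hN
  have hS₁ : Ideal.ofList rs ≤ Module.annihilator R S.X₁ :=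
    hS₂.trans (LinearMap.annihilator_le_of_injective S.f.hom hS.moduleCat_injective_f)
  obtain ⟨η, hη⟩ := Abelian.Ext.contravariant_sequence_exact₁ hS N
    ((mk₀ f).comp ε (zero_add _)) (add_comm 1 _) (hS₃.elim _ _)
  obtain ⟨g, rfl⟩ := (hε S.X₂ hS₂).2 η
  refine ⟨g, (hε S.X₁ hS₁).1 ?_⟩
  simp only [← hη, Abelian.Ext.mk₀_comp_mk₀_assoc]

end Rees

section HomTransfer

theorem isSMulRegular_of_isSMulRegular_linearMap [IsNoetherianRing R] {C B : Type*}
    [AddCommGroup C] [Module R C] [Module.Finite R C] [FaithfulSMul R C]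
    [AddCommGroup B] [Module R B] [Module.Finite R B] {x : R}
    (hx : IsSMulRegular (C →ₗ[R] B) x) : IsSMulRegular B x := by
  let N : Submodule R B := LinearMap.ker (LinearMap.lsmul R B x)
  have hN : Subsingleton (C →ₗ[R] N) := by
    refine subsingleton_of_forall_eq 0 fun f ↦ (LinearMap.cancel_left N.subtype_injective).mp ?_
    rw [LinearMap.comp_zero]
    exact hx.right_eq_zero_of_smul (LinearMap.ext fun c ↦ (f c).2)
  -- An element of `ann C = 0` is regular on `ker x`, which therefore vanishes.
  obtain ⟨r, hr, hreg⟩ := IsSMulRegular.subsingleton_linearMap_iff.mp hN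
  obtain rfl : r = 0 := by rwa [Module.annihilator_eq_bot.mpr ‹_›, Submodule.mem_bot] at hr
  rw [IsSMulRegular.zero_iff_subsingleton, Submodule.subsingleton_iff_eq_bot] at hreg
  exact LinearMap.ker_eq_bot.mp hreg

variable [Small.{v} R]

theorem nonempty_quotSMulTop_linearMap_equiv (C B : ModuleCat.{v} R) {x : R}
    (hx : IsSMulRegular B x) (h : Subsingleton (Abelian.Ext C B 1)) :
    Nonempty (QuotSMulTop x (C →ₗ[R] B) ≃ₗ[R] (C →ₗ[R] QuotSMulTop x B)) := by
  let π : (C →ₗ[R] B) →ₗ[R] (C →ₗ[R] QuotSMulTop x B) :=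
    LinearMap.compRight R (x • (⊤ : Submodule R B)).mkQ
  have hB := hx.smulShortComplex_shortExact
  have hπ : Function.Surjective π := fun φ ↦ by
    obtain ⟨ψ, hψ⟩ := exists_comp_g_eq_of_subsingleton_ext hB h (ModuleCat.ofHom φ)
    exact ⟨ψ.hom, congr(($hψ).hom)⟩
  have hker : LinearMap.ker π = x • ⊤ := by
    refine le_antisymm (fun φ hφ ↦ ?_) fun φ hφ ↦ ?_
    · have := hB.mono_f
      have hφ' : ModuleCat.ofHom φ ≫ (ModuleCat.smulShortComplex B x).g = 0 := by
        ext1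
        exact hφ
      exact (Submodule.mem_smul_pointwise_iff_exists ..).mpr ⟨(hB.exact.lift _ hφ').hom, trivial,
        congr(($(hB.exact.lift_f _ hφ')).hom)⟩
    · obtain ⟨ψ, -, rfl⟩ := (Submodule.mem_smul_pointwise_iff_exists ..).mp hφ
      exact LinearMap.ext fun c ↦ (Submodule.Quotient.mk_eq_zero _).mpr
        (Submodule.smul_mem_pointwise_smul _ _ _ trivial)
  exact ⟨(Submodule.quotEquivOfEq _ _ hker.symm).trans (π.quotKerEquivOfSurjective hπ)⟩

theorem nonempty_quotient_equiv_linearMap_quotient [IsNoetherianRing R] (C B : ModuleCat.{v} R)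
    [Module.Finite R C] [FaithfulSMul R C] [Module.Finite R B] {A : Type*} [AddCommGroup A]
    [Module R A] (e : A ≃ₗ[R] (C →ₗ[R] B)) {rs : List R} (hA : IsWeaklyRegular A rs)
    (h : ∀ i, 0 < i → i ≤ rs.length → Subsingleton (Abelian.Ext C B i)) :
    Nonempty ((A ⧸ (Ideal.ofList rs • ⊤ : Submodule R A)) ≃ₗ[R]
      (C →ₗ[R] B ⧸ (Ideal.ofList rs • ⊤ : Submodule R B))) := by
  induction rs generalizing A B with
  | nil =>
    exact ⟨(Submodule.quotEquivOfEqBot _ (by simp)).trans <| e.trans <|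
      LinearEquiv.congrRight (Submodule.quotEquivOfEqBot _ (by simp)).symm⟩
  | cons r rs ih =>
    rw [isWeaklyRegular_cons_iff] at hA
    have hB : IsSMulRegular B r :=
      isSMulRegular_of_isSMulRegular_linearMap ((e.isSMulRegular_congr r).mp hA.1)
    obtain ⟨e'⟩ := nonempty_quotSMulTop_linearMap_equiv C B hB (h 1 one_pos (by simp))
    have : Module.Finite R (ModuleCat.of R (QuotSMulTop r B)) :=
      inferInstanceAs (Module.Finite R (QuotSMulTop r B))
    obtain ⟨e''⟩ := ih (ModuleCat.of R (QuotSMulTop r B)) ((QuotSMulTop.congr r e).trans e') hA.2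
      fun i hi hi' ↦ subsingleton_ext_to_X₃_of_shortExact hB.smulShortComplex_shortExact C i
        (h (i + 1) i.succ_pos (by simpa using hi')) (h i hi (by simp; lia))
    exact ⟨(Submodule.quotOfListConsSMulTopEquivQuotSMulTopInner A r rs).trans <| e''.trans <|
      LinearEquiv.congrRight (Submodule.quotOfListConsSMulTopEquivQuotSMulTopInner B r rs).symm⟩

end HomTransfer

section Principal

variable {M N : Type*} [AddCommGroup M] [Module R M] [AddCommGroup N] [Module R N]

theorem isPrincipal_iff_exists_forall_exists_smul_eq :
    Module.IsPrincipal R M ↔ ∃ p : M, ∀ m, ∃ r : R, r • p = m := by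
  simp only [Module.IsPrincipal, Submodule.isPrincipal_iff, eq_comm (a := (⊤ : Submodule R M)),
    Submodule.span_singleton_eq_top_iff]

theorem exists_eq_smul_of_isPrincipal (hM : Module.IsPrincipal R M) (f : M →ₗ[R] M) :
    ∃ r : R, ∀ m, f m = r • m := by
  obtain ⟨p, hp⟩ := isPrincipal_iff_exists_forall_exists_smul_eq.mp hM
  obtain ⟨r, hr⟩ := hp (f p)
  refine ⟨r, fun m ↦ ?_⟩
  obtain ⟨s, rfl⟩ := hp m
  rw [map_smul, ← hr, smul_comm]

theorem isPrincipal_linearMap_of_forall_exists_comp_eq (hM : Module.IsPrincipal R M)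
    (u : N →ₗ[R] M) (hu : ∀ v : N →ₗ[R] M, ∃ s : M →ₗ[R] M, s ∘ₗ u = v) :
    Module.IsPrincipal R (N →ₗ[R] M) := by
  refine isPrincipal_iff_exists_forall_exists_smul_eq.mpr ⟨u, fun v ↦ ?_⟩
  obtain ⟨s, rfl⟩ := hu v
  obtain ⟨r, hr⟩ := exists_eq_smul_of_isPrincipal hM s
  exact ⟨r, LinearMap.ext fun n ↦ (hr (u n)).symm⟩

theorem nonempty_linearEquiv_of_isPrincipal [FaithfulSMul R M] (hM : Module.IsPrincipal R M) :
    Nonempty (M ≃ₗ[R] R) := by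
  obtain ⟨p, hp⟩ := isPrincipal_iff_exists_forall_exists_smul_eq.mp hM
  refine ⟨(LinearEquiv.ofBijective (LinearMap.toSpanSingleton R M p) ⟨?_, hp⟩).symm⟩
  refine (injective_iff_map_eq_zero _).mpr fun r (hr : r • p = 0) ↦
    FaithfulSMul.eq_of_smul_eq_smul (α := M) fun m ↦ ?_
  obtain ⟨s, rfl⟩ := hp m
  rw [smul_comm, hr, smul_zero, zero_smul]

variable [IsLocalRing R]

theorem isPrincipal_of_injective_of_maximalIdeal_le_annihilator (hM : Module.IsPrincipal R M)
    (hann : maximalIdeal R ≤ Module.annihilator R M) {f : N →ₗ[R] M}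
    (hf : Function.Injective f) : Module.IsPrincipal R N := by
  obtain ⟨p, hp⟩ := isPrincipal_iff_exists_forall_exists_smul_eq.mp hM
  rw [isPrincipal_iff_exists_forall_exists_smul_eq]
  obtain hN | hN := subsingleton_or_nontrivial N
  · exact ⟨0, fun n ↦ ⟨0, Subsingleton.elim _ _⟩⟩
  obtain ⟨n, hn⟩ := exists_ne (0 : N)
  obtain ⟨r, hr⟩ := hp (f n)
  have hunit : IsUnit r := by
    by_contra hr'
    refine hn (hf ?_)
    rw [← hr, Module.mem_annihilator.mp (hann ((mem_maximalIdeal r).mpr hr')), map_zero]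
  refine ⟨n, fun n' ↦ ?_⟩
  obtain ⟨s, hs⟩ := hp (f n')
  refine ⟨s * ↑hunit.unit⁻¹, hf ?_⟩
  rw [map_smul, ← hr, smul_smul, mul_assoc, hunit.val_inv_mul, mul_one, hs]

theorem annihilator_residueField : Module.annihilator R (ResidueField R) = maximalIdeal R :=
  Ideal.annihilator_quotient

theorem linearMap_residueField_injective {f : ResidueField R →ₗ[R] M} (hf : f ≠ 0) :
    Function.Injective f := by
  have : IsSimpleModule R (ResidueField R) :=
    isSimpleModule_iff_isCoatom.mpr (maximalIdeal.isMaximal R).out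
  exact LinearMap.injective_of_ne_zero hf

theorem isPrincipal_linearMap_residueField_of_isPrincipal_linearMap
    [Nontrivial (ResidueField R →ₗ[R] M →ₗ[R] N)]
    (h : Module.IsPrincipal R (ResidueField R →ₗ[R] M →ₗ[R] N)) :
    Module.IsPrincipal R (M →ₗ[R] ResidueField R) := by
  obtain ⟨f, hf⟩ := exists_ne (0 : ResidueField R →ₗ[R] M →ₗ[R] N)
  obtain ⟨m, hm⟩ : ∃ m, f.flip m ≠ 0 := by
    by_contra! hf'
    exact hf (LinearMap.ext₂ fun a m ↦ LinearMap.congr_fun (hf' m) a)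
  let w : ResidueField R →ₗ[R] ResidueField R →ₗ[R] N :=
    (LinearMap.mul R (ResidueField R)).compr₂ (f.flip m)
  have hw : w ≠ 0 := fun hw ↦ hm <| LinearMap.ext fun a ↦ by
    simpa [w] using LinearMap.congr_fun (LinearMap.congr_fun hw 1) a
  have hann : maximalIdeal R ≤ Module.annihilator R (ResidueField R →ₗ[R] M →ₗ[R] N) := by
    rw [← annihilator_residueField]
    refine fun r hr ↦ Module.mem_annihilator.mpr fun g ↦ LinearMap.ext fun a ↦ ?_
    rw [LinearMap.smul_apply, ← map_smul, Module.mem_annihilator.mp hr a, map_zero,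
      LinearMap.zero_apply]
  exact isPrincipal_of_injective_of_maximalIdeal_le_annihilator h hann
    (f := (LinearMap.lflip (R₀ := R)).toLinearMap ∘ₗ LinearMap.compRight R w) <|
    (LinearMap.lflip (R₀ := R)).injective.comp fun φ ψ hφψ ↦ LinearMap.ext fun m ↦
      linearMap_residueField_injective hw (LinearMap.congr_fun hφψ m)

theorem isPrincipal_of_isPrincipal_linearMap_residueField [Module.Finite R M]
    (h : Module.IsPrincipal R (M →ₗ[R] ResidueField R)) : Module.IsPrincipal R M := by
  let k := ResidueField R
  obtain ⟨φ, hφ⟩ := isPrincipal_iff_exists_forall_exists_smul_eq.mp h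
  have hfinrank : Module.finrank k (k ⊗[R] M) ≤ 1 := by
    rw [← Subspace.dual_finrank_eq]
    refine (LinearMap.liftBaseChangeEquiv k).finrank_eq.symm.trans_le <|
      finrank_le_one φ fun ψ ↦ ?_
    obtain ⟨r, rfl⟩ := hφ ψ
    exact ⟨algebraMap R k r, algebraMap_smul k r φ⟩
  obtain ⟨v, hv⟩ := finrank_le_one_iff.mp hfinrank
  obtain ⟨m, rfl⟩ := TensorProduct.mk_surjective R M k Ideal.Quotient.mk_surjective v
  refine ⟨m, (map_tensorProduct_mk_eq_top.mp (eq_top_iff.mpr fun w _ ↦ ?_)).symm⟩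
  obtain ⟨a, rfl⟩ := hv w
  obtain ⟨r, rfl⟩ := residue_surjective a
  exact ⟨r • m, Submodule.smul_mem _ r (Submodule.mem_span_singleton_self m),
    (map_smul _ r m).trans (algebraMap_smul k r _).symm⟩

end Principal

variable [IsLocalRing R]

theorem shortExact_residueField (S : ModuleCat.{u} R) {f : ResidueField R →ₗ[R] S} (hf : f ≠ 0) :
    (ModuleCat.shortComplexOfCompEqZero f f.range.mkQ (LinearMap.range_mkQ_comp f)).ShortExact :=
  ModuleCat.shortComplex_shortExact _ (LinearMap.exact_map_mkQ_range f)
    (linearMap_residueField_injective hf) (Submodule.mkQ_surjective _)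

variable [IsNoetherianRing R]

section RegularSequence

variable {M : Type*} [AddCommGroup M] [Module R M] [Module.Finite R M]

theorem length_le_ringKrullDim_of_isRegular {rs : List R} (hM : IsRegular M rs) :
    (rs.length : WithBot ℕ∞) ≤ ringKrullDim R := by
  have := hM.quot_ofList_smul_nontrivial ⊤
  calc (rs.length : WithBot ℕ∞)
      ≤ Module.supportDim R (M ⧸ Ideal.ofList rs • (⊤ : Submodule R M)) + rs.length :=
        le_add_of_nonneg_left (Order.krullDim_nonneg_iff.mpr
          (Module.nonempty_support_of_nontrivial.to_subtype))
    _ = Module.supportDim R M := Module.supportDim_add_length_eq_supportDim_of_isRegular rs hM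
    _ ≤ ringKrullDim R := Module.supportDim_le_ringKrullDim R M

theorem exists_isRegular_append_of_subsingleton_linearMap {rs : List R} (hM : IsRegular M rs)
    (hrs : ∀ r ∈ rs, r ∈ maximalIdeal R)
    (h : Subsingleton (ResidueField R →ₗ[R] M ⧸ (Ideal.ofList rs • ⊤ : Submodule R M))) :
    ∃ r, (∀ s ∈ rs ++ [r], s ∈ maximalIdeal R) ∧ IsRegular M (rs ++ [r]) := by
  obtain ⟨r, hr, hreg⟩ := IsSMulRegular.subsingleton_linearMap_iff.mp h
  rw [annihilator_residueField] at hr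
  have := hM.nontrivial
  have hrs' : ∀ s ∈ rs ++ [r], s ∈ maximalIdeal R :=
    List.forall_mem_append.mpr ⟨hrs, List.forall_mem_singleton.mpr hr⟩
  refine ⟨r, hrs', (isRegular_iff_isWeaklyRegular_of_subset_maximalIdeal hrs').mpr ?_⟩
  rw [isWeaklyRegular_append_iff, isWeaklyRegular_singleton_iff]
  exact ⟨hM.toIsWeaklyRegular, hreg⟩

variable (R M) in
theorem exists_isRegular_nontrivial_linearMap [Nontrivial M] :
    ∃ rs : List R, (∀ r ∈ rs, r ∈ maximalIdeal R) ∧ IsRegular M rs ∧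
      Nontrivial (ResidueField R →ₗ[R] M ⧸ (Ideal.ofList rs • ⊤ : Submodule R M)) := by
  by_contra! h
  have exists_length (n : ℕ) :
      ∃ rs : List R, (∀ r ∈ rs, r ∈ maximalIdeal R) ∧ IsRegular M rs ∧ rs.length = n := by
    induction n with
    | zero => exact ⟨[], by simp, IsRegular.nil R M, rfl⟩
    | succ n ih =>
      obtain ⟨rs, hrs, hM, rfl⟩ := ih
      obtain ⟨r, hr, hM'⟩ := exists_isRegular_append_of_subsingleton_linearMap hM hrs (h rs hrs hM)
      exact ⟨rs ++ [r], hr, hM', by simp⟩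
  obtain ⟨d, hd⟩ : ∃ d : ℕ, ringKrullDim R = d := by
    lift ringKrullDim R to ℕ∞ using ringKrullDim_ne_bot with D hD
    lift D to ℕ using fun h ↦ ringKrullDim_ne_top (R := R) (by simp [← hD, h])
    exact ⟨D, rfl⟩
  obtain ⟨rs, -, hM, hlen⟩ := exists_length (d + 1)
  have := length_le_ringKrullDim_of_isRegular hM
  rw [hlen, hd] at this
  exact d.lt_irrefl (by exact_mod_cast this)

end RegularSequence

section Bass

variable (Y : ModuleCat.{u} R) [Module.Finite R Y]

theorem subsingleton_ext_of_subsingleton_ext_quotSMulTop (N : ModuleCat.{u} R)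
    [Module.Finite R N] {x : R} (hx : x ∈ maximalIdeal R) (hN : IsSMulRegular N x) (n : ℕ)
    (h : Subsingleton (Abelian.Ext (ModuleCat.of R (QuotSMulTop x N)) Y (n + 1))) :
    Subsingleton (Abelian.Ext N Y n) := by
  have := ModuleCat.finite_ext R N Y n
  have hle : (⊤ : Submodule R (Abelian.Ext N Y n)) ≤ maximalIdeal R • ⊤ := by
    rintro α -
    obtain ⟨β, rfl⟩ : ∃ β, (mk₀ (x • 𝟙 N)).comp β (zero_add n) = α :=
      Abelian.Ext.contravariant_sequence_exact₁ hN.smulShortComplex_shortExact Y α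
        (add_comm 1 n) (h.elim _ _)
    simpa [Abelian.Ext.mk₀_smul] using Submodule.smul_mem_smul hx (Submodule.mem_top (x := β))
  have htop := Submodule.eq_bot_of_le_smul_of_le_jacobson_bot _ ⊤ Module.Finite.fg_top hle
    (maximalIdeal_le_jacobson _)
  exact (Submodule.subsingleton_iff R).mp (subsingleton_of_bot_eq_top htop.symm)

theorem subsingleton_ext_of_subsingleton_ext_residueField (n : ℕ)
    (hk : Subsingleton (Abelian.Ext (ModuleCat.of R (ResidueField R)) Y n))
    (h : ∀ M : ModuleCat.{u} R, Module.Finite R M → Subsingleton (Abelian.Ext M Y (n + 1)))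
    (M : Type u) [AddCommGroup M] [Module R M] [hM : Module.Finite R M] :
    Subsingleton (Abelian.Ext (ModuleCat.of R M) Y n) := by
  induction hM using IsNoetherianRing.induction_on_isQuotientEquivQuotientPrime R with
  | subsingleton N =>
    have : Subsingleton (ModuleCat.of R N) := ‹_›
    have := (ModuleCat.isZero_of_subsingleton (ModuleCat.of R N)).hasProjectiveDimensionLT_zero
    exact HasProjectiveDimensionLT.subsingleton _ 0 n n.zero_le Y
  | quotient N p e =>
    by_cases hp : p.1 = maximalIdeal R
    · let i : ModuleCat.of R N ≅ ModuleCat.of R (ResidueField R) :=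
        (e.trans (Submodule.quotEquivOfEq _ _ hp)).toModuleIso
      let e' := (((Abelian.extFunctor n).mapIso i.symm.op).app Y).addCommGroupIsoToAddEquiv
      exact e'.toEquiv.subsingleton_congr.mpr hk
    · obtain ⟨x, hxm, hxp⟩ := SetLike.exists_of_lt ((le_maximalIdeal p.2.ne_top).lt_of_ne hp)
      have hx : IsSMulRegular (ModuleCat.of R N) x := (e.isSMulRegular_congr x).mpr <|
        (isSMulRegular_quotient_iff_mem_of_smul_mem _ _).mpr fun y hy ↦
          (p.2.mem_or_mem hy).resolve_left hxp
      exact subsingleton_ext_of_subsingleton_ext_quotSMulTop Y _ hxm hx n (h _ inferInstance)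
  | exact N₁ N₂ N₃ f g hf hg hfg h₁ h₃ =>
    exact subsingleton_ext_X₂_of_shortExact (ModuleCat.shortComplex_shortExact
      (ModuleCat.shortComplexOfCompEqZero f g hfg.linearMap_comp_eq_zero) hfg hf hg) Y n h₁ h₃

theorem subsingleton_ext_of_hasInjectiveDimensionLT_of_hasProjectiveDimensionLT
    {e t : ℕ} [HasInjectiveDimensionLT Y e] (S : ModuleCat.{u} R) [Module.Finite R S]
    [HasProjectiveDimensionLT S t] {f : ResidueField R →ₗ[R] S} (hf : f ≠ 0)
    (M : ModuleCat.{u} R) [Module.Finite R M] {n : ℕ} (hn : t ≤ n) :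
    Subsingleton (Abelian.Ext M Y n) := by
  obtain hne | hne := le_total e n
  · exact HasInjectiveDimensionLT.subsingleton Y e n hne M
  induction hne using Nat.decreasingInduction generalizing M with
  | self => exact HasInjectiveDimensionLT.subsingleton Y e e le_rfl M
  | of_succ n _ ih =>
    have ih (M : ModuleCat.{u} R) (_ : Module.Finite R M) :
        Subsingleton (Abelian.Ext M Y (n + 1)) := ih M (hn.trans n.le_succ)
    refine subsingleton_ext_of_subsingleton_ext_residueField Y n ?_ ih M
    exact subsingleton_ext_X₁_of_shortExact (shortExact_residueField S hf) Y n
      (HasProjectiveDimensionLT.subsingleton S t n hn Y)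
      (ih _ (inferInstanceAs (Module.Finite R (S ⧸ f.range))))

end Bass

theorem hasProjectiveDimensionLE_quotient_of_isWeaklyRegular {rs : List R}
    (hrs : IsWeaklyRegular R rs) (hmem : ∀ r ∈ rs, r ∈ maximalIdeal R) :
    HasProjectiveDimensionLE (ModuleCat.of R (R ⧸ (Ideal.ofList rs • ⊤ : Submodule R R)))
      rs.length := by
  rw [← projectiveDimension_le_iff,
    ModuleCat.projectiveDimension_quotient_eq_add_length_of_isWeaklyRegular (.of R R) rs hrs hmem]
  have hR : projectiveDimension (ModuleCat.of R R) ≤ (0 : ℕ) :=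
    (projectiveDimension_le_iff _ 0).mpr inferInstance
  simpa using add_le_add_left hR (rs.length : WithBot ℕ∞)

theorem isPrincipal_linearMap_residueField_quotient {e : ℕ}
    [HasInjectiveDimensionLT (ModuleCat.of R R) e] {rs : List R} (hrs : IsWeaklyRegular R rs)
    (hmem : ∀ r ∈ rs, r ∈ maximalIdeal R) :
    Module.IsPrincipal R (ResidueField R →ₗ[R] R ⧸ (Ideal.ofList rs • ⊤ : Submodule R R)) := by
  let S := R ⧸ (Ideal.ofList rs • ⊤ : Submodule R R)
  obtain _ | _ := subsingleton_or_nontrivial (ResidueField R →ₗ[R] S)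
  · exact isPrincipal_iff_exists_forall_exists_smul_eq.mpr ⟨0, fun _ ↦ ⟨0, Subsingleton.elim _ _⟩⟩
  obtain ⟨f, hf⟩ := exists_ne (0 : ResidueField R →ₗ[R] S)
  have hS : Module.IsPrincipal R S := .of_surjective _ (Submodule.mkQ_surjective _)
  have hpd := hasProjectiveDimensionLE_quotient_of_isWeaklyRegular hrs hmem
  have hann : Ideal.ofList rs ≤ Module.annihilator R S :=
    (Module.isTorsionBySet_iff_subset_annihilator ..).mp
      (Module.isTorsionBySet_quotient_ideal_smul R (Ideal.ofList rs))
  refine isPrincipal_linearMap_of_forall_exists_comp_eq hS f fun v ↦ ?_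
  obtain ⟨s, hs⟩ := exists_comp_eq_of_isWeaklyRegular (N := ModuleCat.of R R) hrs
    (shortExact_residueField (ModuleCat.of R S) hf) hann
    (subsingleton_ext_of_hasInjectiveDimensionLT_of_hasProjectiveDimensionLT (e := e) _
      (ModuleCat.of R S) hf _ le_rfl) (ModuleCat.ofHom v)
  exact ⟨s.hom, congr(($hs).hom)⟩

theorem IsGorensteinRing.exists_hasInjectiveDimensionLT {R : Type} [CommRing R]
    (hR : IsGorensteinRing R) : ∃ e, HasInjectiveDimensionLT (ModuleCat.of R R) e := by
  obtain ⟨-, e, he⟩ := hR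
  refine ⟨e + 1, .mk fun i hi M α ↦ ?_⟩
  have := subsingleton_abelianExt_of_subsingleton_ext M _ (by lia) (he M i hi)
  exact Subsingleton.elim α 0

theorem d_semidualizing_free_of_local_gorenstein_general {e : ℕ}
    [HasInjectiveDimensionLT (ModuleCat.of R R) e] (C : ModuleCat.{u} R) [Module.Finite R C]
    (hC : Function.Bijective (LinearMap.lsmul R C))
    (hExt : ∀ i : ℕ, 0 < i → i ≤ ringKrullDim R → Subsingleton (Abelian.Ext C C i)) :
    Nonempty (C ≃ₗ[R] R) := by
  obtain ⟨rs, hmem, hrs, hk⟩ := exists_isRegular_nontrivial_linearMap R R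
  have hlen := length_le_ringKrullDim_of_isRegular hrs
  have : FaithfulSMul R C := ⟨fun h ↦ hC.1 (LinearMap.ext h)⟩
  obtain ⟨E⟩ := nonempty_quotient_equiv_linearMap_quotient C C (.ofBijective _ hC)
    hrs.toIsWeaklyRegular fun i hi hi' ↦ hExt i hi (le_trans (by exact_mod_cast hi') hlen)
  let E' := LinearEquiv.congrRight (M := ResidueField R) E
  have := E'.toEquiv.nontrivial_congr.mp hk
  have hprincipal := E'.isPrincipal_iff.mp
    (isPrincipal_linearMap_residueField_quotient (e := e) hrs.toIsWeaklyRegular hmem)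
  exact nonempty_linearEquiv_of_isPrincipal <|
    isPrincipal_of_isPrincipal_linearMap_residueField <|
      isPrincipal_linearMap_residueField_of_isPrincipal_linearMap hprincipal

theorem d_semidualizing_free_of_local_gorenstein
    (R : Type) [CommRing R] [IsNoetherianRing R] [IsLocalRing R]
    (d : ℕ) (hdim : ringKrullDim R = d)
    (hGor : IsGorensteinRing R)
    (C : Type) [AddCommGroup C] [Module R C] [Module.Finite R C]
    (hC : IsSemidualizing R C d) :
    Nonempty (C ≃ₗ[R] R) := by
  obtain ⟨e, _⟩ := hGor.exists_hasInjectiveDimensionLT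
  exact d_semidualizing_free_of_local_gorenstein_general (e := e) (ModuleCat.of R C) hC.2.1
    fun i hi hi' ↦ subsingleton_abelianExt_of_subsingleton_ext _ _ hi <|
      hC.2.2 i hi (by rw [hdim] at hi'; exact_mod_cast hi')
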